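/- arXiv:2412.12958 — 3 statements merged into one kernel-verified Lean document; each statement's English description precedes it below -/
import Mathlib

section
/- If G is a vertex-transitive graph on n vertices, then ϑ(G)·ϑ(Ḡ) = n. -/
open scoped Classical

/-- The Lovász theta function of a graph, as the optimal value of the SDP
max { <J, X> : X ⪰ 0, tr X = 1, X_{ij} = 0 for all edges {i,j} }. -/
noncomputable def lovaszTheta {V : Type} [Fintype V] (G : SimpleGraph V) : ℝ :=
  sSup {t | ∃ X : Matrix V V ℝ, X.PosSemidef ∧ X.trace = 1 ∧
    (∀ i j, G.Adj i j → X i j = 0) ∧ t = ∑ i, ∑ j, X i j}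

theorem psd_iff {V : Type} [Fintype V] (X : Matrix V V ℝ) :
    X.PosSemidef ↔ (∀ i j, X i j = X j i) ∧ ∀ x : V → ℝ, 0 ≤ ∑ i, ∑ j, x i * X i j * x j := by
  rw [Matrix.posSemidef_iff_dotProduct_mulVec]
  refine and_congr ?_ ?_
  · rw [Matrix.IsHermitian, ← Matrix.ext_iff]
    simp only [Matrix.conjTranspose_apply, star_trivial]
    exact ⟨fun h i j => h j i, fun h i j => h j i⟩
  · refine forall_congr' fun x => ?_
    simp only [dotProduct, Matrix.mulVec, star_trivial, Finset.mul_sum, mul_assoc]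

theorem psd_inner {V : Type} [Fintype V] {X Y : Matrix V V ℝ} (hX : X.PosSemidef)
    (hY : Y.PosSemidef) : 0 ≤ ∑ i, ∑ j, X i j * Y i j := by
  have := ((psd_iff _).1 (hX.hadamard hY)).2 (fun _ => 1)
  simpa using this

theorem avg {V : Type} [Fintype V] [Nonempty V] (G H : SimpleGraph V)
    (hvt : ∀ u v : V, ∃ e : G ≃g G, e u = v)
    (hH : ∀ e : G ≃g G, ∀ i j, H.Adj i j → H.Adj (e i) (e j))
    (Y : Matrix V V ℝ) (hY : Y.PosSemidef) (htr : Y.trace = 1)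
    (hz : ∀ i j, H.Adj i j → Y i j = 0) :
    ∃ Z : Matrix V V ℝ, Z.PosSemidef ∧ (∀ i, Z i i = 1 / (Fintype.card V : ℝ)) ∧
      (∀ i j, H.Adj i j → Z i j = 0) ∧
      ∀ i, ∑ j, Z i j = (∑ i, ∑ j, Y i j) / (Fintype.card V : ℝ) := by
  have : Finite (G ≃g G) := DFunLike.finite _
  have : Fintype (G ≃g G) := Fintype.ofFinite _
  have hn : (Fintype.card V : ℝ) ≠ 0 := by simp
  have hc : (Fintype.card (G ≃g G) : ℝ) ≠ 0 := by
    have : Nonempty (G ≃g G) := ⟨1⟩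
    simp
  set c : ℝ := (Fintype.card (G ≃g G) : ℝ) with hcdef
  set n : ℝ := (Fintype.card V : ℝ) with hndef
  let Z : Matrix V V ℝ := c⁻¹ • ∑ g : G ≃g G, Y.submatrix g g
  have hZ : ∀ i j, Z i j = c⁻¹ * ∑ g : G ≃g G, Y (g i) (g j) := by
    intro i j
    simp [Z, Matrix.sum_apply]
  have hinv : ∀ (e : G ≃g G) i j, Z (e i) (e j) = Z i j := by
    intro e i j
    rw [hZ, hZ]
    congr 1
    exact Fintype.sum_equiv (Equiv.mulRight e) _ _ (fun g => rfl)
  have hsumall : ∀ f : V → ℝ, (∀ i j, f i = f j) → ∀ i, f i = (∑ i, f i) / n := by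
    intro f hf i
    rw [Finset.sum_congr rfl (fun j _ => hf j i)]
    simp [← hndef]
    field_simp
  refine ⟨Z, ?_, ?_, ?_, ?_⟩
  · apply Matrix.PosSemidef.smul
    · exact Matrix.posSemidef_sum _ (fun g _ => hY.submatrix g)
    · positivity
  · intro i
    rw [hsumall (fun i => Z i i) (fun i j => by
      obtain ⟨e, rfl⟩ := hvt i j
      exact (hinv e i i).symm) i]
    congr 1
    simp only [hZ]
    rw [← Finset.mul_sum, Finset.sum_comm]
    have : ∀ g : G ≃g G, ∑ i, Y (g i) (g i) = 1 := by
      intro g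
      rw [← htr]
      exact Equiv.sum_comp g.toEquiv (fun i => Y i i)
    simp [this, ← hcdef, hc]
  · intro i j hij
    rw [hZ, Finset.sum_eq_zero (fun g _ => hz _ _ (hH g i j hij)), mul_zero]
  · intro i
    rw [hsumall (fun i => ∑ j, Z i j) (fun i j => by
      obtain ⟨e, rfl⟩ := hvt i j
      rw [← Equiv.sum_comp e.toEquiv (fun k => Z (e i) k)]
      exact Finset.sum_congr rfl (fun k _ => (hinv e i k).symm)) i]
    congr 1
    simp only [hZ]
    simp only [← Finset.mul_sum]
    have : ∀ g : G ≃g G, ∑ i, ∑ j, Y (g i) (g j) = ∑ i, ∑ j, Y i j := by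
      intro g
      rw [← Equiv.sum_comp g.toEquiv (fun i => ∑ j, Y i j)]
      refine Finset.sum_congr rfl fun i _ => ?_
      exact Equiv.sum_comp g.toEquiv (fun j => Y (g i) j)
    have h2 : ∑ i, ∑ j, ∑ g : G ≃g G, Y (g i) (g j)
        = ∑ g : G ≃g G, ∑ i, ∑ j, Y (g i) (g j) := by
      rw [Finset.sum_comm]
      rw [Finset.sum_comm]
      rw [Finset.sum_congr rfl (fun i _ => Finset.sum_comm), Finset.sum_comm]
    rw [h2, Finset.sum_congr rfl (fun g _ => this g)]
    simp [← hcdef, hc]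

theorem upper {V : Type} [Fintype V] [Nonempty V] (G : SimpleGraph V)
    (X Z : Matrix V V ℝ) (hX : X.PosSemidef) (htr : X.trace = 1)
    (hz : ∀ i j, G.Adj i j → X i j = 0) (s : ℝ)
    (hZ : Z.PosSemidef) (hd : ∀ i, Z i i = 1 / (Fintype.card V : ℝ))
    (hZz : ∀ i j, Gᶜ.Adj i j → Z i j = 0)
    (hr : ∀ i, ∑ j, Z i j = s / (Fintype.card V : ℝ)) :
    (∑ i, ∑ j, X i j) * s ≤ (Fintype.card V : ℝ) := by
  have hn : (0 : ℝ) < (Fintype.card V : ℝ) := by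
    exact_mod_cast Fintype.card_pos
  obtain ⟨hsym, hq⟩ := (psd_iff _).1 hZ
  set n : ℝ := (Fintype.card V : ℝ) with hndef
  have hP : (Matrix.of fun i j => Z i j - s / n ^ 2).PosSemidef := by
    rw [psd_iff]
    refine ⟨fun i j => by simp [hsym i j], fun x => ?_⟩
    set a : ℝ := (∑ i, x i) / n with ha
    have hxa : ∑ i, x i = a * n := by rw [ha]; field_simp
    have hcol : ∀ j, ∑ i, Z i j = s / n := by
      intro j
      rw [← hr j]
      exact Finset.sum_congr rfl fun i _ => hsym i j
    have h1 := hq (fun i => x i - a)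
    have e1 : ∑ i, ∑ j, (x i - a) * Z i j * (x j - a)
        = ∑ i, ∑ j, x i * Z i j * x j - a ^ 2 * s := by
      have : ∀ i j, (x i - a) * Z i j * (x j - a)
        = x i * Z i j * x j - a * x i * Z i j - a * x j * Z i j + a ^ 2 * Z i j := by
        intros; ring
      simp only [this, Finset.sum_add_distrib, Finset.sum_sub_distrib]
      have t1 : ∑ i, ∑ j, a * x i * Z i j = a ^ 2 * s := by
        simp only [← Finset.mul_sum, hr]
        rw [← Finset.sum_mul, ← Finset.mul_sum, hxa]; field_simp
      have t2 : ∑ i, ∑ j, a * x j * Z i j = a ^ 2 * s := by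
        rw [Finset.sum_comm]
        simp only [← Finset.mul_sum, hcol]
        rw [← Finset.sum_mul, ← Finset.mul_sum, hxa]; field_simp
      have t3 : ∑ i, ∑ j, a ^ 2 * Z i j = a ^ 2 * s := by
        simp only [← Finset.mul_sum, hr]
        rw [Finset.sum_const, Finset.card_univ, nsmul_eq_mul, ← hndef]; field_simp
      rw [t1, t2, t3]; ring
    have e2 : ∑ i, ∑ j, x i * (Z i j - s / n ^ 2) * x j
        = ∑ i, ∑ j, x i * Z i j * x j - a ^ 2 * s := by
      have : ∀ i j, x i * (Z i j - s / n ^ 2) * x j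
        = x i * Z i j * x j - s / n ^ 2 * x i * x j := by intros; ring
      simp only [this, Finset.sum_sub_distrib, ← Finset.mul_sum, ← Finset.sum_mul, hxa]
      field_simp
    simp only [Matrix.of_apply]
    rw [e2, ← e1]; exact h1
  have h := psd_inner hX hP
  have e : ∑ i, ∑ j, X i j * (Matrix.of fun i j => Z i j - s / n ^ 2) i j
      = 1 / n - (∑ i, ∑ j, X i j) * (s / n ^ 2) := by
    simp only [Matrix.of_apply, mul_sub, Finset.sum_sub_distrib, ← Finset.sum_mul]
    congr 1
    have : ∀ i, ∑ j, X i j * Z i j = X i i * (1 / n) := by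
      intro i
      rw [Finset.sum_eq_single i, hd]
      · intro j _ hji
        by_cases hA : G.Adj i j
        · rw [hz _ _ hA, zero_mul]
        · rw [hZz i j (by simp [hA, hji.symm]), mul_zero]
      · simp
    simp only [this, ← Finset.sum_mul]
    have : ∑ i, X i i = 1 := htr
    rw [this, one_mul]
  rw [e] at h
  have : (1 / n - (∑ i, ∑ j, X i j) * (s / n ^ 2)) * n ^ 2 = n - (∑ i, ∑ j, X i j) * s := by
    field_simp
  nlinarith [mul_nonneg h (sq_nonneg n)]

theorem entry_bound {V : Type} [Fintype V] (X : Matrix V V ℝ) (hX : X.PosSemidef)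
    (htr : X.trace = 1) (i j : V) : |X i j| ≤ 1 := by
  have hd : ∀ i, X i i ≤ 1 := fun i => by
    rw [← htr]
    exact Finset.single_le_sum (f := fun i => X i i) (fun k _ => hX.diag_nonneg)
      (Finset.mem_univ i)
  obtain ⟨hs, hq⟩ := (psd_iff _).1 hX
  have key : ∀ a : ℝ, 0 ≤ X i i + 2 * a * X i j + a ^ 2 * X j j := by
    intro a
    have := hq (fun k => (if k = i then 1 else 0) + a * (if k = j then 1 else 0))
    simp only [add_mul, mul_add, Finset.sum_add_distrib, mul_ite, ite_mul, mul_zero, zero_mul,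
      mul_one, one_mul, Finset.sum_ite_eq', Finset.mem_univ, if_true,
      Finset.sum_ite_irrel, Finset.sum_const_zero] at this
    rw [hs j i] at this
    nlinarith
  rw [abs_le]
  constructor <;> nlinarith [key 1, key (-1), hd i, hd j]

theorem compactD {V : Type} [Fintype V] :
    IsCompact {X : Matrix V V ℝ | X.PosSemidef ∧ X.trace = 1} := by
  have hK : IsCompact (Set.pi Set.univ (fun _ : V => Set.pi Set.univ
      (fun _ : V => Set.Icc (-1 : ℝ) 1))) :=
    isCompact_univ_pi fun _ => isCompact_univ_pi fun _ => isCompact_Icc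
  refine IsCompact.of_isClosed_subset hK ?_ ?_
  · have : {X : Matrix V V ℝ | X.PosSemidef ∧ X.trace = 1}
      = {X : Matrix V V ℝ | ((∀ i j, X i j = X j i) ∧
        ∀ x : V → ℝ, 0 ≤ ∑ i, ∑ j, x i * X i j * x j) ∧ ∑ i, X i i = 1} := by
      ext X
      simp only [Set.mem_setOf_eq, psd_iff]; rfl
    rw [this]
    have hc : ∀ i j, Continuous fun X : Matrix V V ℝ => X i j := fun i j =>
      (continuous_apply j).comp (continuous_apply i)
    refine IsClosed.and (IsClosed.and ?_ ?_) ?_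
    · simp only [Set.setOf_forall]
      exact isClosed_iInter fun i => isClosed_iInter fun j => isClosed_eq (hc _ _) (hc _ _)
    · simp only [Set.setOf_forall]
      exact isClosed_iInter fun x => isClosed_le continuous_const (by fun_prop)
    · exact isClosed_eq (by fun_prop) continuous_const
  · intro X hX i _ j _
    exact abs_le.1 (entry_bound X hX.1 hX.2 i j)

theorem dual {V : Type} [Fintype V] [Nonempty V] (G : SimpleGraph V) (t : ℝ) (ht : 1 < t)
    (hG : ∀ X : Matrix V V ℝ, X.PosSemidef → X.trace = 1 → (∀ i j, G.Adj i j → X i j = 0) →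
      ∑ i, ∑ j, X i j < t) :
    ∃ Y : Matrix V V ℝ, Y.PosSemidef ∧ Y.trace = 1 ∧ (∀ i j, Gᶜ.Adj i j → Y i j = 0) ∧
      (Fintype.card V : ℝ) / t ≤ ∑ i, ∑ j, Y i j := by
  have hn : (0 : ℝ) < (Fintype.card V : ℝ) := by
    exact_mod_cast Fintype.card_pos
  set n : ℝ := (Fintype.card V : ℝ) with hndef
  let L : Matrix V V ℝ →ₗ[ℝ] (V → V → ℝ) × ℝ :=
    { toFun := fun X => (fun i j => if G.Adj i j then X i j else 0, ∑ i, ∑ j, X i j)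
      map_add' := by
        intro X Y
        ext i j
        · simp only [Matrix.add_apply, Prod.fst_add, Pi.add_apply]
          split_ifs <;> simp
        · simp [Finset.sum_add_distrib]
      map_smul' := by
        intro c X
        ext i j
        · simp
        · simp [Finset.mul_sum] }
  have hLc : Continuous L := by
    have hc : ∀ i j, Continuous fun X : Matrix V V ℝ => X i j := fun i j =>
      (continuous_apply j).comp (continuous_apply i)
    refine Continuous.prodMk ?_ ?_
    · refine continuous_pi fun i => continuous_pi fun j => ?_
      by_cases h : G.Adj i j
      · simpa [h] using hc i j
      · simpa [h] using continuous_const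
    · fun_prop
  have hconv : Convex ℝ {X : Matrix V V ℝ | X.PosSemidef ∧ X.trace = 1} := by
    intro X hX Y hY a b ha hb hab
    refine ⟨(hX.1.smul ha).add (hY.1.smul hb), ?_⟩
    rw [Matrix.trace_add, Matrix.trace_smul, Matrix.trace_smul, hX.2, hY.2]
    simpa using hab
  obtain ⟨f, u, v, hfu, huv, hfv⟩ := geometric_hahn_banach_compact_closed
    (s := L '' {X : Matrix V V ℝ | X.PosSemidef ∧ X.trace = 1})
    (t := ({0} : Set (V → V → ℝ)) ×ˢ Set.Ici t)
    (hconv.linear_image L) (compactD.image hLc)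
    ((convex_singleton _).prod (convex_Ici t)) (isClosed_singleton.prod isClosed_Ici)
    (by
      rw [Set.disjoint_left]
      rintro _ ⟨X, hX, rfl⟩ ⟨h1, h2⟩
      have h1' : (fun i j => if G.Adj i j then X i j else 0) = (0 : V → V → ℝ) := h1
      have h2' : t ≤ ∑ i, ∑ j, X i j := h2
      refine absurd h2' (not_le.2 (hG X hX.1 hX.2 fun i j hij => ?_))
      have := congrFun (congrFun h1' i) j
      simpa [hij] using this)
  set c : ℝ := f (0, 1) with hc
  have hf0 : ∀ r : ℝ, f (0, r) = c * r := by
    intro r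
    have : ((0 : V → V → ℝ), r) = r • ((0 : V → V → ℝ), (1 : ℝ)) := by simp
    rw [this, map_smul, smul_eq_mul, mul_comm]
  let m : V → V → ℝ := fun i j => f (Pi.single i (Pi.single j 1), 0)
  have hfm : ∀ w : V → V → ℝ, ∀ r, f (w, r) = ∑ i, ∑ j, m i j * w i j + c * r := by
    intro w r
    have h1 : (w, r) = ∑ i, ∑ j, w i j • ((Pi.single i (Pi.single j 1) : V → V → ℝ), (0 : ℝ))
        + (0, r) := by
      ext i j
      · simp [Prod.fst_sum, Finset.sum_apply, Pi.single_apply, ite_apply]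
      · simp [Prod.snd_sum]
    rw [h1, map_add, hf0]
    congr 1
    simp only [map_sum, map_smul, smul_eq_mul, m, mul_comm]
  have hcore : ∀ X : Matrix V V ℝ, X.PosSemidef → X.trace = 1 →
      ∑ i, ∑ j, (if G.Adj i j then m i j else 0) * X i j + c * ∑ i, ∑ j, X i j < c * t := by
    intro X h1 h2
    have a1 := hfu (L X) ⟨X, ⟨h1, h2⟩, rfl⟩
    have a2 := hfv (0, t) ⟨rfl, le_refl t⟩
    have : L X = (fun i j => if G.Adj i j then X i j else 0, ∑ i, ∑ j, X i j) := rfl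
    rw [this, hfm] at a1
    rw [hf0] at a2
    have e : ∀ i j, m i j * (if G.Adj i j then X i j else 0)
      = (if G.Adj i j then m i j else 0) * X i j := by
      intro i j; split_ifs <;> simp
    simp only [e] at a1
    linarith
  have hcpos : 0 < c := by
    have h := hcore (n⁻¹ • (1 : Matrix V V ℝ)) (Matrix.PosSemidef.one.smul (by positivity))
      (by rw [Matrix.trace_smul, Matrix.trace_one, smul_eq_mul, ← hndef]; field_simp)
    simp [Matrix.one_apply, ← hndef, hn.ne'] at h
    nlinarith
  let N : V → V → ℝ := fun i j => if G.Adj i j then (m i j + m j i) / (2 * c) else 0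
  have hNs : ∀ i j, N i j = N j i := by
    intro i j
    simp only [N, G.adj_comm i j, add_comm]
  let W : Matrix V V ℝ := t • (1 : Matrix V V ℝ) - Matrix.of N
  have hW : ∀ i j, W i j = t * (if i = j then 1 else 0) - N i j := by
    intro i j; simp [W, Matrix.one_apply]
  have hWsym : ∀ i j, W i j = W j i := by
    intro i j; rw [hW, hW, hNs]; simp only [eq_comm]
  have hWx : ∀ x : V → ℝ, ∑ i, ∑ j, x i * W i j * x j
      = t * ∑ i, x i ^ 2 - ∑ i, ∑ j, N i j * (x i * x j) := by
    intro x
    have : ∀ i j, x i * W i j * x j = (if i = j then t * x i * x j else 0) - N i j * (x i * x j) := by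
      intro i j; rw [hW]; split_ifs <;> ring
    simp only [this, Finset.sum_sub_distrib, Finset.sum_ite_eq, Finset.mem_univ, if_true]
    rw [Finset.mul_sum]
    congr 1
    exact Finset.sum_congr rfl fun i _ => by ring
  have hWJ : ∀ x : V → ℝ, (∑ i, x i) ^ 2 ≤ ∑ i, ∑ j, x i * W i j * x j := by
    intro x
    by_cases hx : ∑ i, x i ^ 2 = 0
    · have hx0 : ∀ i, x i = 0 := fun i => by
        have := (Finset.sum_eq_zero_iff_of_nonneg (fun i _ => sq_nonneg (x i))).1 hx i
          (Finset.mem_univ i)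
        simpa using this
      simp [hx0]
    have hxp : 0 < ∑ i, x i ^ 2 := lt_of_le_of_ne
      (Finset.sum_nonneg fun i _ => sq_nonneg _) (Ne.symm hx)
    set q := ∑ i, x i ^ 2 with hq
    have hsq : ∀ y : V → ℝ, ∑ i, ∑ j, y i * y j = (∑ i, y i) ^ 2 := by
      intro y
      rw [sq, Finset.sum_mul_sum]
    have h := hcore (q⁻¹ • Matrix.of fun i j => x i * x j)
      (Matrix.PosSemidef.smul (by
        rw [psd_iff]
        refine ⟨fun i j => by simp [mul_comm], fun y => ?_⟩
        have : ∀ i j, y i * (x i * x j) * y j = (y i * x i) * (y j * x j) := by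
          intros; ring
        simp only [Matrix.of_apply, this]
        rw [hsq (fun i => y i * x i)]
        positivity) (by positivity))
      (by
        rw [Matrix.trace_smul, smul_eq_mul]
        have : (Matrix.of fun i j => x i * x j).trace = q := by
          simp [Matrix.trace, hq, sq]
        rw [this]; field_simp)
    simp only [Matrix.smul_apply, Matrix.of_apply, smul_eq_mul, ← Finset.mul_sum, ← Finset.sum_mul, ← sq] at h
    have e1 : ∑ i, ∑ j, (if G.Adj i j then m i j else 0) * (q⁻¹ * (x i * x j))
        = q⁻¹ * (c * ∑ i, ∑ j, N i j * (x i * x j)) := by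
      have sw : ∑ i, ∑ j, (if G.Adj i j then m j i else 0) * (q⁻¹ * (x i * x j))
          = ∑ i, ∑ j, (if G.Adj i j then m i j else 0) * (q⁻¹ * (x i * x j)) := by
        rw [Finset.sum_comm]
        refine Finset.sum_congr rfl fun i _ => Finset.sum_congr rfl fun j _ => ?_
        rw [G.adj_comm j i, mul_comm (x j)]
      have : ∑ i, ∑ j, (if G.Adj i j then m i j else 0) * (q⁻¹ * (x i * x j))
          + ∑ i, ∑ j, (if G.Adj i j then m j i else 0) * (q⁻¹ * (x i * x j))
          = 2 * (q⁻¹ * (c * ∑ i, ∑ j, N i j * (x i * x j))) := by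
        simp only [← Finset.sum_add_distrib, Finset.mul_sum]
        refine Finset.sum_congr rfl fun i _ => Finset.sum_congr rfl fun j _ => ?_
        simp only [N]
        split_ifs
        · field_simp
        · simp
      linarith
    rw [e1] at h
    rw [hWx]
    set S := ∑ i, ∑ j, N i j * (x i * x j)
    have h3 : q⁻¹ * (c * S) + c * (q⁻¹ * (∑ i, x i) ^ 2) = (c / q) * (S + (∑ i, x i) ^ 2) := by
      field_simp
    have h4 : c * t = (c / q) * (t * q) := by field_simp
    rw [h3, h4] at h
    have := lt_of_mul_lt_mul_left h (by positivity)
    linarith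
  have htp : 0 < t := by linarith
  refine ⟨(n * t)⁻¹ • W, Matrix.PosSemidef.smul ?_ (by positivity), ?_, ?_, ?_⟩
  · rw [psd_iff]
    exact ⟨hWsym, fun x => (sq_nonneg _).trans (hWJ x)⟩
  · have : W.trace = n * t := by
      simp [Matrix.trace, hW, N, hndef]
    rw [Matrix.trace_smul, this, smul_eq_mul]
    field_simp
  · intro i j hij
    rw [SimpleGraph.compl_adj] at hij
    simp [hW, N, hij.1, hij.2]
  · have := hWJ (fun _ => 1)
    simp only [one_mul, mul_one, Finset.sum_const, Finset.card_univ, nsmul_eq_mul, ← hndef] at this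
    simp only [Matrix.smul_apply, smul_eq_mul, ← Finset.mul_sum]
    calc n / t = (n * t)⁻¹ * n ^ 2 := by field_simp
      _ ≤ _ := by gcongr

theorem stmt6 {V : Type} [Fintype V] (G : SimpleGraph V)
    (hvt : ∀ u v : V, ∃ e : G ≃g G, e u = v) :
    lovaszTheta G * lovaszTheta Gᶜ = (Fintype.card V : ℝ) := by
  rcases isEmpty_or_nonempty V with hV | hV
  · have : lovaszTheta G = 0 := by
      unfold lovaszTheta
      convert Real.sSup_empty
      ext t
      simp [Matrix.trace]
    simp [this]
  have hn : (0 : ℝ) < (Fintype.card V : ℝ) := by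
    exact_mod_cast Fintype.card_pos
  set n : ℝ := (Fintype.card V : ℝ) with hndef
  let S : SimpleGraph V → Set ℝ := fun G => {t | ∃ X : Matrix V V ℝ, X.PosSemidef ∧ X.trace = 1 ∧
    (∀ i j, G.Adj i j → X i j = 0) ∧ t = ∑ i, ∑ j, X i j}
  have hS : ∀ G, lovaszTheta G = sSup (S G) := fun _ => rfl
  have hone : ∀ H, (1 : ℝ) ∈ S H := by
    intro H
    refine ⟨n⁻¹ • (1 : Matrix V V ℝ), Matrix.PosSemidef.one.smul (by positivity), ?_, ?_, ?_⟩
    · rw [Matrix.trace_smul, Matrix.trace_one, smul_eq_mul, ← hndef]; field_simp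
    · intro i j hij
      simp [hij.ne]
    · simp [Matrix.one_apply, ← hndef, hn.ne']
  have hmul : ∀ a ∈ S G, ∀ b ∈ S Gᶜ, a * b ≤ n := by
    rintro _ ⟨X, hX, hXt, hXz, rfl⟩ _ ⟨Y, hY, hYt, hYz, rfl⟩
    obtain ⟨Z, hZ, hd, hz, hr⟩ := avg G Gᶜ hvt (by
      intro e i j hij
      rw [SimpleGraph.compl_adj] at hij ⊢
      exact ⟨fun h => hij.1 (e.injective h), fun h => hij.2 (e.map_adj_iff.1 h)⟩) Y hY hYt hYz
    exact upper G X Z hX hXt hXz _ hZ hd hz hr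
  have hbG : BddAbove (S G) := ⟨n, fun a ha => by simpa using hmul a ha 1 (hone _)⟩
  have hbG' : BddAbove (S Gᶜ) := ⟨n, fun a ha => by simpa using hmul 1 (hone _) a ha⟩
  have h1 : 1 ≤ sSup (S G) := le_csSup hbG (hone _)
  have h1' : 1 ≤ sSup (S Gᶜ) := le_csSup hbG' (hone _)
  rw [hS, hS]
  apply le_antisymm
  · rw [← le_div_iff₀ (by linarith)]
    refine csSup_le ⟨1, hone _⟩ fun a ha => ?_
    rw [le_div_iff₀ (by linarith)]
    by_cases hap : 0 < a
    · rw [mul_comm, ← le_div_iff₀ hap]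
      refine csSup_le ⟨1, hone _⟩ fun b hb => ?_
      rw [le_div_iff₀ hap, mul_comm]
      exact hmul a ha b hb
    · nlinarith
  · rw [← div_le_iff₀ (by linarith)]
    refine le_of_forall_gt_imp_ge_of_dense fun t ht => ?_
    obtain ⟨Y, hY, hYt, hYz, hYs⟩ := dual G t (by linarith) (fun X hX hXt hXz =>
      lt_of_le_of_lt (le_csSup hbG ⟨X, hX, hXt, hXz, rfl⟩) ht)
    have h2 : n / t ≤ sSup (S Gᶜ) := hYs.trans (le_csSup hbG' ⟨Y, hY, hYt, hYz, rfl⟩)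
    rw [div_le_iff₀ (by linarith)] at h2
    rw [div_le_iff₀ (by linarith)]
    linarith
end

section
/- The matrix X* defined by X*_{ii} = 1/√q, X*_{ij} = 0 for edges {i,j} of the Paley graph P_q, and X*_{ij} = 2/(q+√q) for distinct non-adjacent i,j, is positive semidefinite with eigenvalues 1, 2/(1+√q), and 0. -/
open scoped Classical

/-- The Paley graph on a finite field: vertices are field elements, two vertices
adjacent iff their difference is a nonzero square. -/
def Paley (F : Type) [Field F] : SimpleGraph F :=
  SimpleGraph.fromRel (fun x y => ∃ z : F, z ≠ 0 ∧ x - y = z ^ 2)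

/-- The set of eigenvalues of a real matrix. -/
def matrixSpectrum {V : Type} [Fintype V] (A : Matrix V V ℝ) : Set ℝ :=
  {μ | ∃ v : V → ℝ, v ≠ 0 ∧ A.mulVec v = μ • v}

/-- The matrix X* with diagonal 1/√q, zero on edges of the Paley graph and
2/(q+√q) on non-edges. -/
noncomputable def Xstar (F : Type) [Field F] (q : ℕ) : Matrix F F ℝ :=
  Matrix.of fun i j =>
    if i = j then 1 / Real.sqrt q
    else if (Paley F).Adj i j then 0 else 2 / (q + Real.sqrt q)

/-- Matrix of the quadratic character. -/
noncomputable def QM (F : Type) [Field F] [Fintype F] : Matrix F F ℝ :=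
  Matrix.of fun i j => ((quadraticChar F (i - j) : ℤ) : ℝ)

/-- All-ones matrix. -/
def JM (F : Type) : Matrix F F ℝ := Matrix.of fun _ _ => 1

section aux
variable {F : Type} [Field F] [Fintype F]

lemma ringChar_ne (hq : Fintype.card F % 4 = 1) : ringChar F ≠ 2 := by
  intro h
  have := FiniteField.even_card_of_char_two h
  omega

lemma chi_neg_one (hq : Fintype.card F % 4 = 1) : quadraticChar F (-1) = 1 := by
  rw [quadraticChar_one_iff_isSquare (neg_ne_zero.mpr one_ne_zero),
    FiniteField.isSquare_neg_one_iff]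
  omega

lemma chi_neg (hq : Fintype.card F % 4 = 1) (a : F) :
    quadraticChar F (-a) = quadraticChar F a := by
  rw [neg_eq_neg_one_mul, map_mul, chi_neg_one hq, one_mul]

lemma chi_conv (hq : Fintype.card F % 4 = 1) (i j : F) :
    ∑ k, quadraticChar F (i - k) * quadraticChar F (k - j)
      = (if i = j then (Fintype.card F : ℤ) else 0) - 1 := by
  have hF := ringChar_ne hq
  have h1 : ∑ k, quadraticChar F (i - k) * quadraticChar F (k - j)
      = ∑ x, quadraticChar F x * quadraticChar F ((i - j) - x) := by
    rw [← (Equiv.subLeft i).sum_comp]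
    refine Finset.sum_congr rfl fun x _ => ?_
    simp only [Equiv.subLeft_apply]
    congr 2 <;> ring
  rw [h1]
  by_cases hij : i = j
  · subst hij
    simp only [sub_self, zero_sub, chi_neg hq, if_true]
    have h2 : ∀ x : F, quadraticChar F x * quadraticChar F x = 1 - if x = 0 then 1 else 0 := by
      intro x
      by_cases hx : x = 0
      · simp [hx]
      · rw [← sq, quadraticChar_sq_one hx]; simp [hx]
    simp only [h2]
    simp
  · have ha : i - j ≠ 0 := sub_ne_zero.mpr hij
    generalize i - j = a at ha
    have hJ := jacobiSum_nontrivial_inv (quadraticChar_ne_one hF)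
    rw [(quadraticChar_isQuadratic F).inv, chi_neg_one hq, jacobiSum] at hJ
    rw [← Equiv.sum_comp (Equiv.mulLeft₀ a ha)]
    simp only [hij, if_false, zero_sub]
    rw [← hJ]
    refine Finset.sum_congr rfl fun x _ => ?_
    have : a - a * x = a * (1 - x) := by ring
    change quadraticChar F (a * x) * quadraticChar F (a - a * x) = _
    simp only [this, map_mul]
    have := quadraticChar_sq_one ha
    linear_combination (quadraticChar F x * quadraticChar F (1 - x)) * this

lemma QM_sq (hq : Fintype.card F % 4 = 1) :
    QM F * QM F = (Fintype.card F : ℝ) • (1 : Matrix F F ℝ) - JM F := by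
  ext i j
  have := chi_conv hq i j
  simp only [Matrix.mul_apply, QM, JM, Matrix.of_apply, Matrix.sub_apply, Matrix.smul_apply,
    Matrix.one_apply, smul_eq_mul, mul_ite, mul_one, mul_zero]
  exact_mod_cast this

lemma QM_symm (hq : Fintype.card F % 4 = 1) : (QM F).transpose = QM F := by
  ext i j
  simp only [Matrix.transpose_apply, QM, Matrix.of_apply]
  rw [← neg_sub, chi_neg hq]

lemma chi_sum (hq : Fintype.card F % 4 = 1) (i : F) :
    ∑ k, quadraticChar F (i - k) = 0 := by
  rw [← quadraticChar_sum_zero (ringChar_ne hq)]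
  exact (Equiv.subLeft i).sum_comp _

lemma QM_JM (hq : Fintype.card F % 4 = 1) : QM F * JM F = 0 := by
  ext i j
  simp only [Matrix.mul_apply, QM, JM, Matrix.of_apply, mul_one, Matrix.zero_apply]
  exact_mod_cast chi_sum hq i

lemma JM_symm : (JM F).transpose = JM F := rfl

lemma JM_QM (hq : Fintype.card F % 4 = 1) : JM F * QM F = 0 := by
  have := congrArg Matrix.transpose (QM_JM (F := F) hq)
  rwa [Matrix.transpose_mul, QM_symm hq, JM_symm, Matrix.transpose_zero] at this

lemma JM_sq : JM F * JM F = (Fintype.card F : ℝ) • JM F := by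
  ext i j
  simp [Matrix.mul_apply, JM]

lemma adj_iff (hq : Fintype.card F % 4 = 1) (i j : F) (hij : i ≠ j) :
    (Paley F).Adj i j ↔ quadraticChar F (i - j) = 1 := by
  have key : ∀ a b : F, a ≠ b → ((∃ z : F, z ≠ 0 ∧ a - b = z ^ 2) ↔
      quadraticChar F (a - b) = 1) := by
    intro a b hab
    have hab' := sub_ne_zero.mpr hab
    rw [quadraticChar_one_iff_isSquare hab', isSquare_iff_exists_sq]
    constructor
    · rintro ⟨z, _, h⟩; exact ⟨z, h⟩
    · rintro ⟨z, h⟩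
      refine ⟨z, ?_, h⟩
      rintro rfl
      apply hab'; rw [h]; simp
  rw [Paley, SimpleGraph.fromRel_adj, key i j hij, key j i hij.symm, ← neg_sub i j, chi_neg hq]
  simp [hij]

lemma Xstar_eq (hq : Fintype.card F % 4 = 1) (s : ℝ) (hs : 0 < s)
    (hs2 : s * s = Fintype.card F) (hss : Real.sqrt (Fintype.card F) = s) :
    Xstar F (Fintype.card F) =
      (1 / (s * (s + 1))) • (s • (1 : Matrix F F ℝ) + JM F - QM F) := by
  ext i j
  simp only [Xstar, Matrix.of_apply, hss, Matrix.smul_apply, Matrix.sub_apply, Matrix.add_apply,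
    Matrix.one_apply, JM, QM, smul_eq_mul]
  simp only [← hs2]
  by_cases hij : i = j
  · subst hij
    simp
    field_simp
  · have h1 := quadraticChar_dichotomy (sub_ne_zero.mpr hij)
    simp only [hij, if_false, adj_iff hq i j hij]
    rcases h1 with h | h
    · simp [h]
    · simp [h]
      field_simp
      norm_num [mul_comm]

end aux

theorem stmt10 (q : ℕ) (F : Type) [Field F] [Fintype F]
    (hcard : Fintype.card F = q) (hq : q % 4 = 1) :
    (Xstar F q).PosSemidef ∧
    matrixSpectrum (Xstar F q) = {1, 2 / (1 + Real.sqrt q), 0} := by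
  subst hcard
  obtain ⟨s, hss⟩ : ∃ s, Real.sqrt (Fintype.card F) = s := ⟨_, rfl⟩
  have hc1 : (1 : ℝ) < Fintype.card F := by exact_mod_cast Fintype.one_lt_card
  have hs1 : 1 < s := by rw [← hss]; exact Real.lt_sqrt_of_sq_lt (by simpa using hc1)
  have hs : 0 < s := by linarith
  have hs2 : s * s = Fintype.card F := by rw [← hss]; exact Real.mul_self_sqrt (by positivity)
  have hX := Xstar_eq hq s hs hs2 hss
  have hQ2 := QM_sq (F := F) hq
  have hQJ := QM_JM (F := F) hq
  have hJQ := JM_QM (F := F) hq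
  have hJ2 := JM_sq (F := F)
  have hne : s * (s + 1) ≠ 0 := by positivity
  rw [hss]
  rw [← hs2] at hQ2 hJ2
  constructor
  · have hN : (s • (1 : Matrix F F ℝ) - QM F).conjTranspose = s • (1 : Matrix F F ℝ) - QM F := by
      rw [Matrix.conjTranspose_eq_transpose_of_trivial, Matrix.transpose_sub, QM_symm hq]
      simp
    have p1 := Matrix.posSemidef_conjTranspose_mul_self (s • (1 : Matrix F F ℝ) - QM F)
    have p2 := Matrix.posSemidef_conjTranspose_mul_self (JM F)
    rw [hN] at p1
    rw [Matrix.conjTranspose_eq_transpose_of_trivial, JM_symm, hJ2] at p2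
    have e : Xstar F (Fintype.card F) = (1 / (s * (s + 1)) * (1 / (2 * s))) •
        ((s • (1 : Matrix F F ℝ) - QM F) * (s • (1 : Matrix F F ℝ) - QM F)
          + ((1 + 2 * s) / (s * s)) • ((s * s) • JM F)) := by
      rw [hX]
      simp only [sub_mul, mul_sub, hQ2, smul_mul_assoc, mul_smul_comm, one_mul, mul_one]
      ext i j
      simp
      field_simp
      ring
    rw [e]
    exact (p1.add (p2.smul (by positivity))).smul (by positivity)
  · have hJv : ∀ v : F → ℝ, (JM F).mulVec v = fun _ => ∑ i, v i := by
      intro v; ext i; simp [Matrix.mulVec, dotProduct, JM]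
    have hXv : ∀ v, (Xstar F (Fintype.card F)).mulVec v
        = (1 / (s * (s + 1))) • (s • v + (JM F).mulVec v - (QM F).mulVec v) := by
      intro v
      rw [hX, Matrix.smul_mulVec, Matrix.sub_mulVec, Matrix.add_mulVec, Matrix.smul_mulVec,
        Matrix.one_mulVec]
    have hQQ : ∀ v, (QM F).mulVec ((QM F).mulVec v) = (s * s) • v - (JM F).mulVec v := by
      intro v
      rw [Matrix.mulVec_mulVec, hQ2, Matrix.sub_mulVec, Matrix.smul_mulVec, Matrix.one_mulVec]
    have hJQv : ∀ v, (JM F).mulVec ((QM F).mulVec v) = 0 := by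
      intro v; rw [Matrix.mulVec_mulVec, hJQ, Matrix.zero_mulVec]
    have hQJv : ∀ v, (QM F).mulVec ((JM F).mulVec v) = 0 := by
      intro v; rw [Matrix.mulVec_mulVec, hQJ, Matrix.zero_mulVec]
    have hJJv : ∀ v, (JM F).mulVec ((JM F).mulVec v) = (s * s) • (JM F).mulVec v := by
      intro v; rw [Matrix.mulVec_mulVec, hJ2, Matrix.smul_mulVec]
    -- a vector with zero sum
    let w : F → ℝ := fun x => if x = 0 then 1 else if x = 1 then -1 else 0
    have hw : w = Pi.single 0 1 - Pi.single 1 1 := by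
      ext x
      by_cases h0 : x = 0
      · simp [w, h0]
      · by_cases h1 : x = 1
        · simp [w, h1]
        · simp [w, h0, h1]
    have hJw : (JM F).mulVec w = 0 := by
      rw [hw, Matrix.mulVec_sub]
      ext i
      simp [JM]
    have hQw : (QM F).mulVec w 0 = -1 := by
      rw [hw, Matrix.mulVec_sub]
      have h := chi_neg_one hq
      rw [quadraticChar_apply] at h
      simp [QM, h]
    have hw0 : w 0 = 1 := by simp [w]
    ext μ
    simp only [matrixSpectrum, Set.mem_setOf_eq, Set.mem_insert_iff, Set.mem_singleton_iff]
    constructor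
    · rintro ⟨v, hv, he⟩
      rw [hXv] at he
      have hQv : (QM F).mulVec v = (s - s * (s + 1) * μ) • v + (JM F).mulVec v := by
        ext i
        have := congrFun he i
        simp at this ⊢
        field_simp at this
        linarith
      by_cases hJ : (JM F).mulVec v = 0
      · have h2 := hQQ v
        rw [hQv, hJ, add_zero, Matrix.mulVec_smul, hQv, hJ] at h2
        obtain ⟨i, hi⟩ := Function.ne_iff.mp hv
        have h3 := congrFun h2 i
        simp at h3 hi
        have h4 : s * (s + 1) * (s * μ * ((s + 1) * μ - 2)) = 0 := by
          apply mul_right_cancel₀ hi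
          linear_combination h3
        have h5 : μ * ((s + 1) * μ - 2) = 0 := by
          have := (mul_eq_zero.mp h4).resolve_left hne
          rw [mul_assoc] at this
          exact (mul_eq_zero.mp this).resolve_left hs.ne'
        rcases mul_eq_zero.mp h5 with h | h
        · right; right; exact h
        · right; left
          rw [eq_div_iff (by positivity)]
          linarith
      · left
        have h2 := congrArg (JM F).mulVec hQv
        rw [hJQv, Matrix.mulVec_add, Matrix.mulVec_smul, hJJv] at h2
        obtain ⟨i, hi⟩ := Function.ne_iff.mp hJ
        have h3 := congrFun h2 i
        simp only [Pi.add_apply, Pi.smul_apply, Pi.zero_apply, smul_eq_mul] at h3 hi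
        have h4 : s * (s + 1) * (1 - μ) = 0 := by
          apply mul_right_cancel₀ hi
          linear_combination -h3
        have := (mul_eq_zero.mp h4).resolve_left hne
        linarith
    · rintro (rfl | rfl | rfl)
      · refine ⟨(JM F).mulVec (Pi.single 0 1), ?_, ?_⟩
        · intro h
          have := congrFun h 0
          simp [JM] at this
        · rw [hXv, hQJv, hJJv]
          ext i
          simp
          field_simp
          ring
      · refine ⟨s • w - (QM F).mulVec w, ?_, ?_⟩
        · intro h
          have := congrFun h 0
          simp [hw0, hQw] at this
          linarith
        · rw [hXv, Matrix.mulVec_sub, Matrix.mulVec_sub, Matrix.mulVec_smul, Matrix.mulVec_smul,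
            hJQv, hQQ, hJw]
          ext i
          simp
          field_simp
          ring
      · refine ⟨s • w + (QM F).mulVec w, ?_, ?_⟩
        · intro h
          have := congrFun h 0
          simp [hw0, hQw] at this
          linarith
        · rw [hXv, Matrix.mulVec_add, Matrix.mulVec_add, Matrix.mulVec_smul, Matrix.mulVec_smul,
            hJQv, hQQ, hJw]
          ext i
          simp
          right
          ring
end

section
/- Let P_q be a Paley graph with q ≥ 25 and suppose α(P_q) < ⌊(√q+3)/2⌋. Then z_{ℓ(q)+1}(P_q) = z_{ℓ(q)}(P_q) = ϑ(P_q), where ℓ(q) = ⌊(√q+3)/2⌋; i.e., also adding exact subgraph constraints for all subgraphs of order ℓ(q)+1 does not improve the Lovász theta function. -/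
open scoped Classical

/-- Feasibility for the SDP formulation ϑ₁:
max 1ᵀx s.t. [[X, x],[xᵀ,1]] ⪰ 0, diag(X) = x, X_{ij} = 0 on edges. -/
def Theta1Feasible {V : Type} [Fintype V] (G : SimpleGraph V)
    (x : V → ℝ) (X : Matrix V V ℝ) : Prop :=
  (Matrix.fromBlocks X (Matrix.of fun i (_ : Unit) => x i)
      (Matrix.of fun (_ : Unit) j => x j) 1).PosSemidef ∧
  (∀ i, X i i = x i) ∧ (∀ i j, G.Adj i j → X i j = 0)

/-- The squared stable set polytope STAB²(H): the convex hull of the outer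
products ssᵀ of incidence vectors s of stable sets of H. -/
def stab2 {W : Type} (H : SimpleGraph W) : Set (Matrix W W ℝ) :=
  convexHull ℝ {M | ∃ s : W → ℝ, (∀ i, s i = 0 ∨ s i = 1) ∧
    (∀ i j, H.Adj i j → s i * s j = 0) ∧ M = Matrix.vecMulVec s s}

/-- The optimal value z_J(G) of the ϑ₁ SDP with the exact subgraph constraint
added for every vertex subset I ∈ J. -/
noncomputable def zJ {V : Type} [Fintype V] (G : SimpleGraph V) (J : Set (Set V)) : ℝ :=
  sSup {t | ∃ (x : V → ℝ) (X : Matrix V V ℝ), Theta1Feasible G x X ∧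
    (∀ I ∈ J, X.submatrix (fun a : I => (a : V)) (fun a : I => (a : V)) ∈
      stab2 (G.induce I)) ∧
    t = ∑ i, x i}

/-- The k-th level z_k(G) of the exact subgraph hierarchy: exact subgraph
constraints for all k-element vertex subsets (with the convention
z_k(G) = z_n(G) for k > n). -/
noncomputable def zk {V : Type} [Fintype V] (G : SimpleGraph V) (k : ℕ) : ℝ :=
  zJ G {I : Set V | I.ncard = min k (Fintype.card V)}

/-- The stability number: the largest cardinality of a set of pairwise
non-adjacent vertices. -/
noncomputable def stabilityNumber {V : Type} (G : SimpleGraph V) : ℕ :=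
  sSup {n | ∃ s : Finset V, (∀ a ∈ s, ∀ b ∈ s, ¬ G.Adj a b) ∧ s.card = n}


theorem aux_stab2_sum {W : Type} (H : SimpleGraph W) {ι : Type} [Fintype ι]
    (w : ι → ℝ) (s : ι → W → ℝ) (hw : ∀ k, 0 ≤ w k) (hsum : ∑ k, w k ≤ 1)
    (hs : ∀ k i, s k i = 0 ∨ s k i = 1)
    (hst : ∀ k i j, H.Adj i j → s k i * s k j = 0) :
    ∑ k, w k • Matrix.vecMulVec (s k) (s k) ∈ stab2 H := by
  have h := (convex_convexHull ℝ {M : Matrix W W ℝ | ∃ s : W → ℝ, (∀ i, s i = 0 ∨ s i = 1) ∧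
    (∀ i j, H.Adj i j → s i * s j = 0) ∧ M = Matrix.vecMulVec s s}).sum_mem
    (t := (Finset.univ : Finset (Option ι)))
    (w := fun o => o.elim (1 - ∑ k, w k) w)
    (z := fun o => o.elim 0 (fun k => Matrix.vecMulVec (s k) (s k)))
    (by
      intro o _
      cases o with
      | none => simpa using hsum
      | some k => exact hw k)
    (by simp [Fintype.sum_option])
    (by
      intro o _
      apply subset_convexHull
      cases o with
      | none => exact ⟨fun _ => 0, by simp, by simp, by ext; simp [Matrix.vecMulVec]⟩
      | some k => exact ⟨s k, hs k, hst k, rfl⟩)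
  simpa [Fintype.sum_option, stab2] using h

theorem aux_decomp {W : Type} [Fintype W] (H : SimpleGraph W) (C : Finset W) (p c : ℝ)
    (hc : 0 ≤ c) (M : Matrix W W ℝ)
    (hC : ∀ a ∈ C, ∀ b ∈ C, ¬ H.Adj a b)
    (hdiag : ∀ i, M i i = p) (hadj : ∀ i j, H.Adj i j → M i j = 0)
    (hnon : ∀ i j, i ≠ j → ¬ H.Adj i j → M i j = c)
    (hcard : (Fintype.card W : ℝ) * p ≤ 1)
    (hdeg : ∀ i, c * ((if i ∈ C then 1 else 0) +
      ∑ j, (if i ≠ j ∧ ¬ H.Adj i j ∧ ¬ (i ∈ C ∧ j ∈ C) then (1:ℝ) else 0)) ≤ p) :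
    M ∈ stab2 H := by
  set P : W → W → Prop := fun i j => i ≠ j ∧ ¬ H.Adj i j ∧ ¬ (i ∈ C ∧ j ∈ C) with hP
  have hPs : ∀ i j, P i j ↔ P j i := by
    intro i j; simp only [hP, H.adj_comm, ne_comm, and_comm]
  set g : W → W → ℝ := fun i j => if P i j then (1:ℝ) else 0 with hg
  have hgs : ∀ i j, g i j = g j i := by
    intro i j; simp only [hg, hPs i j]
  have hg0 : ∀ i j, 0 ≤ g i j := by intro i j; simp only [hg]; split_ifs <;> norm_num
  set wC : ℝ := if C.Nonempty then c else 0 with hwC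
  set d : W → ℝ := fun i => p - c * ((if i ∈ C then 1 else 0) + ∑ j, g i j) with hd
  have key := aux_stab2_sum H (ι := Unit ⊕ (W × W) ⊕ W)
    (Sum.elim (fun _ => wC) (Sum.elim (fun ij => c / 2 * g ij.1 ij.2) d))
    (Sum.elim (fun _ a => if a ∈ C then 1 else 0)
      (Sum.elim (fun ij a => if P ij.1 ij.2 ∧ (a = ij.1 ∨ a = ij.2) then 1 else 0)
        (fun i a => if a = i then 1 else 0)))
    (by
      rintro (_ | ij | i)
      · simp only [Sum.elim_inl, hwC]; split_ifs <;> simp [hc]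
      · simp only [Sum.elim_inl, Sum.elim_inr]
        exact mul_nonneg (by linarith) (hg0 _ _)
      · simp only [Sum.elim_inr, hd, hg]; linarith [hdeg i])
    (by
      have h1 : wC ≤ c * C.card := by
        simp only [hwC]; split_ifs with h
        · have : (1:ℝ) ≤ C.card := by exact_mod_cast h.card_pos
          nlinarith
        · positivity
      have h2 : 0 ≤ ∑ i, ∑ j, g i j :=
        Finset.sum_nonneg fun i _ => Finset.sum_nonneg fun j _ => hg0 i j
      simp only [Fintype.sum_sum_type, Sum.elim_inl, Sum.elim_inr, Fintype.sum_prod_type,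
        Finset.univ_unique, hd, ← Finset.mul_sum, Finset.sum_sub_distrib,
        Finset.sum_add_distrib, Finset.sum_const, Finset.card_univ, nsmul_eq_mul]
      have h3 : ∑ i, (if i ∈ C then (1:ℝ) else 0) = C.card := by simp
      rw [h3, Finset.card_singleton, Nat.cast_one, one_mul]
      nlinarith [mul_nonneg hc h2])
    (by
      rintro (_ | ij | i) a
      all_goals simp only [Sum.elim_inl, Sum.elim_inr]
      all_goals split_ifs <;> simp)
    (by
      rintro (_ | ⟨i, j⟩ | i) a b hab
      · simp only [Sum.elim_inl]
        have := hC a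
        split_ifs with h1 h2 <;> simp
        exact hC a h1 b h2 hab
      · simp only [Sum.elim_inl, Sum.elim_inr]
        have h1 := hab.ne
        have h2 := hab.symm
        split_ifs with h3 h4 <;> simp
        simp only [hP] at h3 h4
        grind
      · simp only [Sum.elim_inr]
        have h1 := hab.ne
        split_ifs with h3 h4 <;> simp
        exact h1 (h3.trans h4.symm))
  convert key using 1
  ext a b
  simp only [Fintype.sum_sum_type, Sum.elim_inl, Sum.elim_inr, Fintype.sum_prod_type,
        Finset.univ_unique, Finset.sum_singleton, Matrix.sum_apply,
        Matrix.smul_apply, Matrix.vecMulVec_apply, smul_eq_mul]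
  have e1 : wC * ((if a ∈ C then 1 else 0) * (if b ∈ C then 1 else 0)) =
      c * ((if a ∈ C then 1 else 0) * (if b ∈ C then 1 else 0)) := by
    by_cases h : a ∈ C
    · have : C.Nonempty := ⟨a, h⟩
      simp [hwC, this]
    · simp [h]
  have e2 : ∀ i j, c / 2 * g i j *
      ((if P i j ∧ (a = i ∨ a = j) then 1 else 0) * (if P i j ∧ (b = i ∨ b = j) then 1 else 0)) =
      c / 2 * (if a = i then (if b = i then g i j else 0) else 0) +
      c / 2 * (if a = i then (if b = j then g i j else 0) else 0) +
      c / 2 * (if a = j then (if b = i then g i j else 0) else 0) +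
      c / 2 * (if a = j then (if b = j then g i j else 0) else 0) := by
    intro i j
    by_cases h : P i j
    · have hij : i ≠ j := h.1
      have : g i j = 1 := by simp [hg, h]
      rw [this]
      by_cases h1 : a = i <;> by_cases h2 : a = j <;> by_cases h3 : b = i <;> by_cases h4 : b = j <;>
        simp [h] <;> grind
    · have : g i j = 0 := by simp [hg, h]
      simp [this]
  have e3 : ∀ i, d i * ((if a = i then 1 else 0) * (if b = i then 1 else 0)) =
     if a = i then (if b = i then d i else 0) else 0 := by
    intro i; split_ifs <;> simp
  simp only [e1, e2, e3]
  simp only [Finset.sum_add_distrib, ← Finset.mul_sum]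
  rw [Finset.sum_comm (f := fun i j => if a = j then (if b = i then g i j else 0) else 0),
    Finset.sum_comm (f := fun i j => if a = j then (if b = j then g i j else 0) else 0)]
  have f1 : ∀ f : W → W → ℝ, ∑ i, ∑ j, (if a = i then f i j else 0) = ∑ j, f a j := by
    intro f
    rw [Finset.sum_comm]; simp
  rw [f1 (fun i j => if b = i then g i j else 0), f1 (fun i j => if b = j then g i j else 0),
    f1 (fun j i => if b = i then g i j else 0), f1 (fun j i => if b = j then g i j else 0)]
  by_cases hab : a = b
  · subst hab
    have hga : g a a = 0 := by simp [hg, hP]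
    simp only [hdiag, Finset.sum_ite_eq, Finset.mem_univ, if_true, hga, hd]
    simp only [fun x => hgs x a]
    split_ifs <;> ring
  · have hba : ¬ b = a := fun h => hab h.symm
    simp only [hba, if_false, Finset.sum_const_zero, Finset.sum_ite_eq, Finset.mem_univ, if_true]
    rw [hgs b a]
    by_cases h : H.Adj a b
    · have : g a b = 0 := by simp [hg, hP, h]
      have hh := hC a
      rw [hadj a b h, this]
      by_cases h1 : a ∈ C
      · have : b ∉ C := fun h2 => hh h1 b h2 h
        simp [this]
      · simp [h1]
    · rw [hnon a b hab h]
      by_cases h1 : a ∈ C <;> by_cases h2 : b ∈ C <;> simp [hg, hP, h, hab, h1, h2]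

theorem aux_exists_C {W : Type} [Fintype W] (H : SimpleGraph W)
    (hω : ∀ s : Finset W, (∀ a ∈ s, ∀ b ∈ s, a ≠ b → H.Adj a b) → s.card + 2 ≤ Fintype.card W) :
    ∃ C : Finset W, (∀ a ∈ C, ∀ b ∈ C, ¬ H.Adj a b) ∧ (C = ∅ ∨ 3 ≤ C.card) ∧
      ∀ i, i ∉ C → ∃ j, H.Adj i j := by
  set U : Finset W := Finset.univ.filter (fun i => ∀ j, ¬ H.Adj i j) with hU
  have hUm : ∀ i, i ∈ U ↔ ∀ j, ¬ H.Adj i j := by intro i; simp [hU]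
  have hUs : ∀ i, ¬ i ∈ U → ∃ j, H.Adj i j := by
    intro i hi; rw [hUm] at hi; push Not at hi; exact hi
  by_cases h0 : U = ∅
  · exact ⟨U, by simp [h0], Or.inl h0, hUs⟩
  by_cases h3 : 3 ≤ U.card
  · exact ⟨U, fun a ha b _ => (hUm a).1 ha b, Or.inr h3, hUs⟩
  have hne : U.Nonempty := Finset.nonempty_iff_ne_empty.2 h0
  have hpos := hne.card_pos
  obtain ⟨u, hu⟩ := hne
  have hn : 3 ≤ Fintype.card W := by
    have := hω {u} (by intro a ha b hb; simp at ha hb; subst ha; subst hb; simp)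
    simpa using this
  by_cases h2 : U.card = 2
  · have : ∃ a, a ∉ U := by
      by_contra h; push Not at h
      have : U = Finset.univ := Finset.eq_univ_iff_forall.2 h
      rw [this, Finset.card_univ] at h2; omega
    obtain ⟨a, ha⟩ := this
    refine ⟨insert a U, ?_, Or.inr ?_, ?_⟩
    · intro x hx y hy hxy
      rw [Finset.mem_insert] at hx hy
      rcases hx with rfl | hx
      · rcases hy with rfl | hy
        · exact hxy.ne rfl
        · exact (hUm y).1 hy x hxy.symm
      · exact (hUm x).1 hx y hxy
    · rw [Finset.card_insert_of_notMem ha]; omega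
    · intro i hi; apply hUs; intro h; exact hi (Finset.mem_insert_of_mem h)
  · have h1 : U.card = 1 := by omega
    have hUu : U = {u} := by
      obtain ⟨v, hv⟩ := Finset.card_eq_one.1 h1
      rw [hv] at hu ⊢; simp at hu; rw [hu]
    have : ∃ a, a ≠ u ∧ ∃ b, b ≠ u ∧ a ≠ b ∧ ¬ H.Adj a b := by
      by_contra h; push Not at h
      have := hω (Finset.univ.erase u) (by
        intro a ha b hb hab
        exact h a (Finset.ne_of_mem_erase ha) b (Finset.ne_of_mem_erase hb) hab)
      rw [Finset.card_erase_of_mem (Finset.mem_univ _), Finset.card_univ] at this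
      omega
    obtain ⟨a, hau, b, hbu, hab, hnab⟩ := this
    have hu' := (hUm u).1 hu
    refine ⟨{u, a, b}, ?_, Or.inr ?_, ?_⟩
    · intro x hx y hy hxy
      simp only [Finset.mem_insert, Finset.mem_singleton] at hx hy
      have hyx := hxy.symm
      have := hxy.ne
      rcases hx with rfl | rfl | rfl
      · exact hu' _ hxy
      · rcases hy with rfl | rfl | rfl
        · exact hu' _ hyx
        · exact this rfl
        · exact hnab hxy
      · rcases hy with rfl | rfl | rfl
        · exact hu' _ hyx
        · exact hnab hyx
        · exact this rfl
    · rw [Finset.card_eq_three.2 ⟨u, a, b, hau.symm, hbu.symm, hab, rfl⟩]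
    · intro i hi; apply hUs; rw [hUu]; intro h; apply hi
      simp at h; simp [h]

/-- combination : exact subgraph constraint for a small graph -/
theorem aux_local {W : Type} [Fintype W] (H : SimpleGraph W) (p c : ℝ) (l : ℕ)
    (hc : 0 ≤ c) (M : Matrix W W ℝ)
    (hdiag : ∀ i, M i i = p) (hadj : ∀ i j, H.Adj i j → M i j = 0)
    (hnon : ∀ i j, i ≠ j → ¬ H.Adj i j → M i j = c)
    (hcard : (Fintype.card W : ℝ) * p ≤ 1)
    (hWl : Fintype.card W ≤ l + 1) (hlc : c * ((l : ℝ) - 1) ≤ p)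
    (hω : ∀ s : Finset W, (∀ a ∈ s, ∀ b ∈ s, a ≠ b → H.Adj a b) → s.card < l) :
    M ∈ stab2 H := by
  by_cases hW : Fintype.card W ≤ l
  · refine aux_decomp H ∅ p c hc M (by simp) hdiag hadj hnon hcard ?_
    intro i
    refine le_trans (mul_le_mul_of_nonneg_left ?_ hc) hlc
    simp only [Finset.notMem_empty, if_false, zero_add, Finset.sum_boole]
    have : (Finset.univ.filter (fun j => i ≠ j ∧ ¬ H.Adj i j ∧ ¬ (False ∧ False))).card + 1 ≤ l := by
      refine le_trans ?_ hW
      rw [← Finset.card_univ]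
      refine Finset.card_lt_card (Finset.filter_ssubset.2 ⟨i, Finset.mem_univ _, by simp⟩)
    have := (Nat.cast_le (α := ℝ)).2 this
    push_cast at this
    linarith
  · have hWe : Fintype.card W = l + 1 := by omega
    obtain ⟨C, hC1, hC2, hC3⟩ := aux_exists_C H (fun s hs => by have := hω s hs; omega)
    refine aux_decomp H C p c hc M hC1 hdiag hadj hnon hcard ?_
    intro i
    refine le_trans (mul_le_mul_of_nonneg_left ?_ hc) hlc
    rw [Finset.sum_boole]
    by_cases hi : i ∈ C
    · have h3 : 3 ≤ C.card := by
        rcases hC2 with h | h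
        · simp [h] at hi
        · exact h
      have : (Finset.univ.filter (fun j => i ≠ j ∧ ¬ H.Adj i j ∧ ¬ (i ∈ C ∧ j ∈ C))).card + 3
          ≤ l + 1 := by
        rw [← hWe, ← Finset.card_compl_add_card C]
        refine le_trans (Nat.add_le_add ?_ h3) le_rfl
        apply Finset.card_le_card
        intro j hj
        simp [hi] at hj ⊢; exact hj.2.2
      have := (Nat.cast_le (α := ℝ)).2 this
      push_cast at this
      rw [if_pos hi]
      linarith
    · obtain ⟨j0, hj0⟩ := hC3 i hi
      have : (Finset.univ.filter (fun j => i ≠ j ∧ ¬ H.Adj i j ∧ ¬ (i ∈ C ∧ j ∈ C))).card + 2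
          ≤ l + 1 := by
        rw [← hWe, ← Finset.card_compl_add_card ({i, j0} : Finset W),
          Finset.card_pair hj0.ne]
        refine Nat.add_le_add ?_ le_rfl
        apply Finset.card_le_card
        intro j hj
        simp at hj ⊢
        refine ⟨fun h => hj.1 h.symm, fun h => hj.2.1 (h ▸ hj0)⟩
      have := (Nat.cast_le (α := ℝ)).2 this
      push_cast at this
      rw [if_neg hi]
      linarith

/-- real valued quadratic character -/
noncomputable def auxChi (F : Type) [Field F] [Fintype F] (a : F) : ℝ := (quadraticChar F a : ℝ)

theorem aux_char {F : Type} [Field F] [Fintype F] (hq : Fintype.card F % 4 = 1) :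
    ringChar F ≠ 2 := by
  intro h
  have := FiniteField.even_card_of_char_two h
  omega

theorem aux_chi_neg_one {F : Type} [Field F] [Fintype F] (hq : Fintype.card F % 4 = 1) :
    quadraticChar F (-1) = 1 := by
  rw [quadraticChar_one_iff_isSquare (by simp), FiniteField.isSquare_neg_one_iff]
  omega

theorem aux_chi_symm {F : Type} [Field F] [Fintype F] (hq : Fintype.card F % 4 = 1) (a b : F) :
    quadraticChar F (a - b) = quadraticChar F (b - a) := by
  have : a - b = (-1) * (b - a) := by ring
  rw [this, map_mul, aux_chi_neg_one hq, one_mul]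

theorem aux_adj {F : Type} [Field F] [Fintype F] (hq : Fintype.card F % 4 = 1) (a b : F) :
    (Paley F).Adj a b ↔ quadraticChar F (a - b) = 1 := by
  have h1 : ∀ x y : F, (∃ z : F, z ≠ 0 ∧ x - y = z ^ 2) ↔ quadraticChar F (x - y) = 1 := by
    intro x y
    constructor
    · rintro ⟨z, hz, h⟩
      rw [h, quadraticChar_sq_one' hz]
    · intro h
      have h0 : x - y ≠ 0 := by
        intro h0; rw [h0, quadraticChar_zero] at h; exact absurd h (by norm_num)
      obtain ⟨z, hz⟩ := (quadraticChar_one_iff_isSquare h0).1 h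
      refine ⟨z, ?_, by rw [hz]; ring⟩
      rintro rfl; simp at hz; exact h0 hz
  simp only [Paley, SimpleGraph.fromRel_adj, h1, aux_chi_symm hq b a, or_self]
  constructor
  · exact fun h => h.2
  · intro h
    refine ⟨?_, h⟩
    rintro rfl
    simp at h

theorem aux_conv {F : Type} [Field F] [Fintype F] (hq : Fintype.card F % 4 = 1) (i j : F) :
    ∑ k, auxChi F (i - k) * auxChi F (k - j) =
      if i = j then (Fintype.card F : ℝ) - 1 else -1 := by
  have hF := aux_char hq
  split_ifs with h
  · subst h
    have : ∀ k, auxChi F (i - k) * auxChi F (k - i) = 1 - if k = i then 1 else 0 := by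
      intro k
      unfold auxChi
      rw [aux_chi_symm hq i k]
      split_ifs with h
      · subst h; simp
      · have := quadraticChar_sq_one (sub_ne_zero.2 h)
        have : ((quadraticChar F (k - i) : ℤ) : ℝ) ^ 2 = 1 := by exact_mod_cast this
        linarith
    simp [this]
  · have hij : i - j ≠ 0 := sub_ne_zero.2 h
    have J := jacobiSum_nontrivial_inv (quadraticChar_ne_one hF)
    rw [(quadraticChar_isQuadratic F).inv, aux_chi_neg_one hq, jacobiSum] at J
    have : ∑ k, quadraticChar F (i - k) * quadraticChar F (k - j) = -1 := by
      rw [← J]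
      symm
      refine Fintype.sum_equiv ((Equiv.mulLeft₀ (i - j) hij).trans (Equiv.addRight j)) _ _ ?_
      intro x
      have e1 : i - ((i - j) * x + j) = (i - j) * (1 - x) := by ring
      have e2 : ((i - j) * x + j) - j = (i - j) * x := by ring
      simp only [Equiv.trans_apply, Equiv.mulLeft₀_apply, Equiv.coe_addRight, e1, e2, map_mul]
      have := quadraticChar_sq_one hij
      linear_combination (- quadraticChar F x * quadraticChar F (1 - x)) * this
    unfold auxChi
    exact_mod_cast this

theorem aux_sum {F : Type} [Field F] [Fintype F] (hq : Fintype.card F % 4 = 1) (j : F) :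
    ∑ k, auxChi F (k - j) = 0 := by
  have h := quadraticChar_sum_zero (aux_char hq)
  have : ∑ k, quadraticChar F (k - j) = 0 := by
    rw [← h]
    exact Fintype.sum_equiv (Equiv.subRight j) _ _ (fun x => by simp)
  unfold auxChi
  exact_mod_cast this

theorem aux_symm {F : Type} [Field F] [Fintype F] (hq : Fintype.card F % 4 = 1) (a b : F) :
    auxChi F (a - b) = auxChi F (b - a) := by
  unfold auxChi; rw [aux_chi_symm hq]

/-- twice a projection onto an eigenspace of the Paley graph -/
noncomputable def auxN (F : Type) [Field F] [Fintype F] (e : ℝ) : Matrix F F ℝ :=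
  Matrix.of fun i j => (if i = j then 1 else 0) + e * auxChi F (i - j) - e ^ 2

theorem auxN_sq {F : Type} [Field F] [Fintype F] (hq : Fintype.card F % 4 = 1) (e : ℝ)
    (he : e ^ 2 * Fintype.card F = 1) : auxN F e * (auxN F e).conjTranspose = (2:ℝ) • auxN F e := by
  ext i j
  simp only [Matrix.mul_apply, Matrix.conjTranspose_apply, auxN, Matrix.of_apply,
    Matrix.smul_apply, star_trivial, smul_eq_mul]
  have e1 : ∀ k, ((if i = k then (1:ℝ) else 0) + e * auxChi F (i - k) - e ^ 2) *
      ((if j = k then 1 else 0) + e * auxChi F (j - k) - e ^ 2) =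
      (if i = k then ((if j = k then 1 else 0) + e * auxChi F (j - k) - e ^ 2) else 0)
      + (if j = k then (e * auxChi F (i - k) - e ^ 2) else 0)
      + e ^ 2 * (auxChi F (i - k) * auxChi F (k - j))
      - e ^ 3 * auxChi F (k - i) - e ^ 3 * auxChi F (k - j) + e ^ 4 := by
    intro k
    rw [aux_symm hq j k, aux_symm hq k i]
    split_ifs <;> ring
  simp only [e1, Finset.sum_add_distrib, Finset.sum_sub_distrib, ← Finset.mul_sum,
    aux_conv hq, aux_sum hq, Finset.sum_ite_eq, Finset.mem_univ, if_true, Finset.sum_const,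
    Finset.card_univ, nsmul_eq_mul, aux_symm hq j i, eq_comm (a := j) (b := i)]
  split_ifs with h
  · linear_combination (1 + e^2) * he
  · linear_combination (e^2) * he

theorem auxN_pos {F : Type} [Field F] [Fintype F] (hq : Fintype.card F % 4 = 1) (e : ℝ)
    (he : e ^ 2 * Fintype.card F = 1) : (auxN F e).PosSemidef := by
  have h := (Matrix.posSemidef_self_mul_conjTranspose (auxN F e)).smul
    (show (0:ℝ) ≤ 1/2 by norm_num)
  rw [auxN_sq hq e he, smul_smul] at h
  simpa using h

theorem auxN_inner {F : Type} [Field F] [Fintype F] (hq : Fintype.card F % 4 = 1) (e : ℝ)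
    (he : e ^ 2 * Fintype.card F = 1) (X : Matrix F F ℝ) (hX : X.PosSemidef) :
    0 ≤ ∑ i, ∑ j, auxN F e i j * X i j := by
  have h1 := (hX.mul_mul_conjTranspose_same (auxN F e)).trace_nonneg
  have hN := (auxN_pos hq e he).isHermitian
  rw [Matrix.mul_assoc, Matrix.trace_mul_comm, Matrix.mul_assoc, hN.eq] at h1
  have h2 := auxN_sq hq e he
  rw [hN.eq] at h2
  rw [h2] at h1
  have h3 : ∑ i, ∑ j, auxN F e i j * X i j = (X * auxN F e).trace := by
    simp only [Matrix.trace, Matrix.diag, Matrix.mul_apply]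
    rw [Finset.sum_comm]
    refine Finset.sum_congr rfl fun i _ => Finset.sum_congr rfl fun j _ => ?_
    have a := hX.isHermitian.apply j i
    simp only [star_trivial] at a
    rw [mul_comm, a]
  rw [h3]
  rw [Matrix.mul_smul, Matrix.trace_smul, smul_eq_mul] at h1
  linarith

/-- dual bound -/
theorem aux_dual {F : Type} [Field F] [Fintype F] (hq : Fintype.card F % 4 = 1) (r : ℝ)
    (hr : 0 < r) (hr2 : r ^ 2 = Fintype.card F) (X : Matrix F F ℝ) (hX : X.PosSemidef)
    (hadj : ∀ i j, (Paley F).Adj i j → X i j = 0) :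
    ∑ i, ∑ j, X i j ≤ r * X.trace := by
  have he : (1 / r) ^ 2 * (Fintype.card F : ℝ) = 1 := by
    rw [← hr2]; field_simp
  have h := auxN_inner hq (1 / r) he X hX
  have key : ∀ i j, auxN F (1 / r) i j * X i j =
      (1 + 1 / r) * (if i = j then X i j else 0) - (1 / r + 1 / r ^ 2) * X i j := by
    intro i j
    simp only [auxN, Matrix.of_apply, auxChi]
    by_cases hij : i = j
    · subst hij; simp; ring
    · rw [if_neg hij, if_neg hij]
      rcases quadraticChar_dichotomy (sub_ne_zero.2 hij) with h | h
      · rw [hadj i j ((aux_adj hq i j).2 h)]; ring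
      · rw [h]; push_cast; ring
  simp only [key, Finset.sum_sub_distrib, ← Finset.mul_sum, Finset.sum_ite_eq,
    Finset.mem_univ, if_true] at h
  have ht : ∑ i, X i i = X.trace := rfl
  rw [ht] at h
  have h5 : (1 + 1 / r) * X.trace - (1 / r + 1 / r ^ 2) * ∑ i, ∑ j, X i j =
     ((1 + r) / r ^ 2) * (r * X.trace - ∑ i, ∑ j, X i j) := by field_simp; ring
  rw [h5] at h
  have := nonneg_of_mul_nonneg_right h (by positivity)
  linarith

theorem aux_block {V : Type} [Fintype V] (x : V → ℝ) (X : Matrix V V ℝ) :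
    (Matrix.fromBlocks X (Matrix.of fun i (_ : Unit) => x i)
      (Matrix.of fun (_ : Unit) j => x j) 1).PosSemidef ↔
    (X - Matrix.vecMulVec x x).PosSemidef := by
  haveI : Invertible (1 : Matrix Unit Unit ℝ) := invertibleOne
  have h := Matrix.PosDef.fromBlocks₂₂ X (Matrix.of fun i (_ : Unit) => x i)
    (D := (1 : Matrix Unit Unit ℝ)) Matrix.PosDef.one
  have e1 : (Matrix.of fun i (_ : Unit) => x i).conjTranspose = Matrix.of fun (_ : Unit) j => x j := by
    ext; simp
  rw [e1] at h
  rw [h]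
  have : (Matrix.of fun i (_ : Unit) => x i) * (1 : Matrix Unit Unit ℝ)⁻¹ *
      (Matrix.of fun (_ : Unit) j => x j) = Matrix.vecMulVec x x := by
    ext; simp [Matrix.mul_apply, Matrix.vecMulVec_apply]
  rw [this]

theorem aux_theta1_le {F : Type} [Field F] [Fintype F] (hq : Fintype.card F % 4 = 1) (r : ℝ)
    (hr : 0 < r) (hr2 : r ^ 2 = Fintype.card F) (x : F → ℝ) (X : Matrix F F ℝ)
    (h : Theta1Feasible (Paley F) x X) : ∑ i, x i ≤ r := by
  obtain ⟨h1, h2, h3⟩ := h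
  rw [aux_block] at h1
  have hX : X.PosSemidef := by
    have := h1.add (Matrix.posSemidef_vecMulVec_self_star x)
    simpa using this
  have hd := aux_dual hq r hr hr2 X hX h3
  have ht : X.trace = ∑ i, x i := by simp [Matrix.trace, h2]
  rw [ht] at hd
  have h4 := h1.dotProduct_mulVec_nonneg (fun _ => (1:ℝ))
  have h5 : (∑ i, x i) ^ 2 ≤ ∑ i, ∑ j, X i j := by
    simp only [dotProduct, Matrix.mulVec, Pi.star_apply, star_trivial, one_mul, mul_one,
      Matrix.sub_apply, Matrix.vecMulVec_apply, Finset.sum_sub_distrib] at h4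
    rw [sq, Finset.sum_mul_sum]
    linarith
  by_contra hcon
  push Not at hcon
  nlinarith

theorem aux_clique {F : Type} [Field F] [Fintype F] (hq : Fintype.card F % 4 = 1)
    (s : Finset F) (hs : ∀ a ∈ s, ∀ b ∈ s, a ≠ b → (Paley F).Adj a b) :
    s.card ≤ stabilityNumber (Paley F) := by
  obtain ⟨u, hu⟩ := quadraticChar_exists_neg_one (aux_char hq)
  have hu0 : u ≠ 0 := by rintro rfl; simp at hu
  apply le_csSup
  · refine ⟨Fintype.card F, ?_⟩
    rintro n ⟨t, _, rfl⟩
    exact Finset.card_le_univ t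
  · refine ⟨s.image (fun a => u * a), ?_, ?_⟩
    · intro a ha b hb hab
      obtain ⟨a, ha', rfl⟩ := Finset.mem_image.1 ha
      obtain ⟨b, hb', rfl⟩ := Finset.mem_image.1 hb
      have hne : a ≠ b := by rintro rfl; exact hab.ne rfl
      have h1 := (aux_adj hq _ _).1 (hs a ha' b hb' hne)
      have h2 := (aux_adj hq _ _).1 hab
      rw [← mul_sub, map_mul, h1, hu] at h2
      norm_num at h2
    · exact Finset.card_image_of_injective _ (mul_right_injective₀ hu0)

/-- the optimal solution -/
noncomputable def auxX (F : Type) [Field F] [Fintype F] (r : ℝ) : Matrix F F ℝ :=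
  Matrix.of fun i j => (1 / (r + 1)) * auxN F (-(1 / r)) i j + (1 / r) * (1 / r)

theorem auxX_val {F : Type} [Field F] [Fintype F] (hq : Fintype.card F % 4 = 1) (r : ℝ)
    (hr : 0 < r) :
    (∀ i, auxX F r i i = 1 / r) ∧ (∀ i j, (Paley F).Adj i j → auxX F r i j = 0) ∧
    (∀ i j, i ≠ j → ¬ (Paley F).Adj i j → auxX F r i j = 2 / (r * (r + 1))) := by
  have : r + 1 ≠ 0 := by positivity
  refine ⟨?_, ?_, ?_⟩
  · intro i
    simp [auxX, auxN, auxChi]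
    field_simp
    ring
  · intro i j h
    have hne : i ≠ j := h.ne
    rw [aux_adj hq] at h
    simp only [auxX, auxN, auxChi, Matrix.of_apply, h, hne, if_false]
    push_cast
    field_simp
    ring
  · intro i j hne h
    rw [aux_adj hq] at h
    have := (quadraticChar_dichotomy (sub_ne_zero.2 hne)).resolve_left h
    simp only [auxX, auxN, auxChi, Matrix.of_apply, this, hne, if_false]
    push_cast
    field_simp
    ring

theorem auxX_feas {F : Type} [Field F] [Fintype F] (hq : Fintype.card F % 4 = 1) (r : ℝ)
    (hr : 0 < r) (hr2 : r ^ 2 = Fintype.card F) :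
    Theta1Feasible (Paley F) (fun _ => 1 / r) (auxX F r) := by
  obtain ⟨h1, h2, h3⟩ := auxX_val (F := F) hq r hr
  refine ⟨?_, h1, h2⟩
  rw [aux_block]
  have he : (-(1 / r)) ^ 2 * (Fintype.card F : ℝ) = 1 := by
    rw [← hr2]; field_simp
  have h := (auxN_pos hq _ he).smul (show (0:ℝ) ≤ 1 / (r + 1) by positivity)
  convert h using 1
  ext i j
  simp [auxX, Matrix.vecMulVec_apply]

theorem aux_theta {F : Type} [Field F] [Fintype F] (hq : Fintype.card F % 4 = 1) (r : ℝ)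
    (hr : 0 < r) (hr2 : r ^ 2 = Fintype.card F) : lovaszTheta (Paley F) = r := by
  apply IsGreatest.csSup_eq
  obtain ⟨h1, h2, h3⟩ := auxX_val (F := F) hq r hr
  constructor
  · refine ⟨(1 / r) • auxX F r, ?_, ?_, ?_, ?_⟩
    · have := (aux_block _ _).1 (auxX_feas hq r hr hr2).1
      have hX : (auxX F r).PosSemidef := by
        have := this.add (Matrix.posSemidef_vecMulVec_self_star (fun _ : F => 1 / r))
        simpa using this
      exact hX.smul (by positivity)
    · simp only [Matrix.trace, Matrix.diag, Matrix.smul_apply, h1, Finset.sum_const,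
        Finset.card_univ, nsmul_eq_mul, smul_eq_mul, ← hr2]
      field_simp
    · intro i j h
      simp [h2 i j h]
    · have e : ∀ j : F, ∑ i, auxX F r i j = 1 := by
        intro j
        simp only [auxX, auxN, Matrix.of_apply, Finset.sum_add_distrib, ← Finset.mul_sum,
          Finset.sum_sub_distrib, aux_sum hq, Finset.sum_ite_eq', Finset.mem_univ, if_true,
          Finset.sum_const, Finset.card_univ, nsmul_eq_mul, ← hr2]
        field_simp
        ring
      have e' : ∑ i, ∑ j, ((1 / r) • auxX F r) i j = ∑ j, ∑ i, ((1 / r) • auxX F r) i j :=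
        Finset.sum_comm
      rw [e']
      simp only [Matrix.smul_apply, smul_eq_mul, ← Finset.mul_sum, e, Finset.sum_const,
        Finset.card_univ, nsmul_eq_mul, ← hr2]
      field_simp
  · rintro t ⟨X, hX, ht, hadj, rfl⟩
    have := aux_dual hq r hr hr2 X hX hadj
    rw [ht] at this
    linarith

theorem aux_zk {F : Type} [Field F] [Fintype F] (hq : Fintype.card F % 4 = 1) (r : ℝ)
    (hr : 5 ≤ r) (hr2 : r ^ 2 = Fintype.card F) (l k : ℕ) (hk : k ≤ l + 1)
    (hl : (l : ℝ) ≤ (r + 3) / 2) (hα : stabilityNumber (Paley F) < l) :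
    zk (Paley F) k = r := by
  have hr0 : 0 < r := by linarith
  obtain ⟨h1, h2, h3⟩ := auxX_val (F := F) hq r hr0
  apply IsGreatest.csSup_eq
  constructor
  · refine ⟨_, _, auxX_feas hq r hr0 hr2, ?_, ?_⟩
    · intro I hI
      have hc : Fintype.card I ≤ l + 1 := by
        have hI' : I.ncard = min k (Fintype.card F) := hI
        rw [← Nat.card_eq_fintype_card]
        have : Nat.card I = I.ncard := rfl
        omega
      refine aux_local _ (1 / r) (2 / (r * (r + 1))) l (by positivity) _ (fun i => h1 i)
        (fun i j h => h2 _ _ h) (fun i j hij h => h3 _ _ (fun h' => hij (Subtype.ext h')) h)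
        ?_ hc ?_ ?_
      · have : (Fintype.card I : ℝ) ≤ l + 1 := by exact_mod_cast hc
        rw [mul_one_div, div_le_one hr0]
        linarith
      · rw [div_mul_eq_mul_div, div_le_div_iff₀ (by positivity) hr0]
        nlinarith
      · intro s hs
        refine lt_of_le_of_lt ?_ hα
        rw [← Finset.card_map (Function.Embedding.subtype (· ∈ I))]
        apply aux_clique hq
        intro a ha b hb hab
        obtain ⟨a, ha', rfl⟩ := Finset.mem_map.1 ha
        obtain ⟨b, hb', rfl⟩ := Finset.mem_map.1 hb
        exact hs a ha' b hb' (fun h => hab (by rw [h]))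
    · simp only [Finset.sum_const, Finset.card_univ, nsmul_eq_mul, ← hr2]
      field_simp
  · rintro t ⟨x, X, hf, _, rfl⟩
    exact aux_theta1_le hq r hr0 hr2 x X hf

theorem stmt13 (q : ℕ) (F : Type) [Field F] [Fintype F]
    (hcard : Fintype.card F = q) (hq : q % 4 = 1) (hq25 : 25 ≤ q)
    (halpha : (stabilityNumber (Paley F) : ℤ) < ⌊(Real.sqrt q + 3) / 2⌋) :
    zk (Paley F) ((⌊(Real.sqrt q + 3) / 2⌋).toNat + 1) =
        zk (Paley F) (⌊(Real.sqrt q + 3) / 2⌋).toNat ∧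
      zk (Paley F) (⌊(Real.sqrt q + 3) / 2⌋).toNat = lovaszTheta (Paley F) := by

  subst hcard
  set r : ℝ := Real.sqrt (Fintype.card F : ℕ) with hrd
  have hr2 : r ^ 2 = Fintype.card F := Real.sq_sqrt (by positivity)
  have hr : 5 ≤ r := by
    apply Real.le_sqrt_of_sq_le
    have : (25:ℝ) ≤ Fintype.card F := by exact_mod_cast hq25
    linarith
  have hpos : 0 ≤ ⌊(r + 3) / 2⌋ := Int.floor_nonneg.2 (by linarith)
  have hl : ((⌊(r + 3) / 2⌋.toNat : ℕ) : ℝ) ≤ (r + 3) / 2 := by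
    have h1 : ((⌊(r + 3) / 2⌋.toNat : ℕ) : ℤ) = ⌊(r + 3) / 2⌋ := Int.toNat_of_nonneg hpos
    have h2 : ((⌊(r + 3) / 2⌋.toNat : ℕ) : ℝ) = ((⌊(r + 3) / 2⌋ : ℤ) : ℝ) := by
      exact_mod_cast congrArg (Int.cast (R := ℝ)) h1
    rw [h2]
    exact Int.floor_le _
  have hα : stabilityNumber (Paley F) < ⌊(r + 3) / 2⌋.toNat := by omega
  rw [aux_zk hq r hr hr2 _ _ le_rfl hl hα, aux_zk hq r hr hr2 _ _ (Nat.le_succ _) hl hα,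
    aux_theta hq r (by linarith) hr2]
  exact ⟨rfl, rfl⟩
end
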